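/- Let I, J, K be finite index sets, p : I × J → (0,1), q : I × K → (0,1), c¹ : J → ℝ, c² : K → ℝ, α ∈ (0,1), β, γ ∈ (0,1) with β + γ = 1, and δ = (2γ + αβ − αγ − √(α(4βγ + αβ² + αγ² − 2αβγ)))/(2γ). Let Ω be the set of pairs (y, z) of binary vectors y : J → {0,1}, z : K → {0,1} with (1 − ∏_j p_{ij}^{y_j})(1 − ∏_k q_{ik}^{z_k}) ≥ α for all i ∈ I, and let Ω_LA be the set of binary pairs (y, z) satisfying, for all i ∈ I: ∑_j y_j ln(p_{ij}) ≤ ln(1−α), ∑_k z_k ln(q_{ik}) ≤ ln(1−α), and β∑_j y_j ln(p_{ij}) + γ∑_k z_k ln(q_{ik}) ≤ ln((1 − α/(1−δ))^β δ^γ). If (y*, z*) minimizes the cost c(y,z) = ∑_j c¹_j y_j + ∑_k c²_k z_k over Ω_LA, then for every (y, z) ∈ Ω one has c(y*, z*) ≤ c(y, z); i.e., the optimum of the linearly approximated problem is a lower bound on the optimal objective value of the original nonlinear problem. -/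

import Mathlib

/-!
In the coordinates `P = ∏ p ^ y` and `Q = ∏ q ^ z`, the nonlinear constraint cuts out of the square
`(0, 1]²` the region `(1 - P) * (1 - Q) ≥ α`, which is convex by AM-GM. At a boundary point
`(P₀, Q₀)` where the gradient `(β / P₀, γ / Q₀)` of `β log P + γ log Q` is proportional to the
normal `(1 - Q₀, 1 - P₀)`, concavity of the logarithm and the supporting line of the region show
that `β log P + γ log Q` is at most its value at `(P₀, Q₀)`. This point is `Q₀ = δ`,
`P₀ = 1 - α / (1 - δ)`, so the third constraint of `Ω_LA` holds on `Ω`; the other two only say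
`P ≤ 1 - α` and `Q ≤ 1 - α`.
-/

open scoped BigOperators

/-- The nonlinear feasible region `Ω` of the GUTLCSCP: binary pairs `(y, z)` with
`(1 − ∏ j, p (i,j) ^ y j) * (1 − ∏ k, q (i,k) ^ z k) ≥ α` for all demand nodes `i`. -/
def OmegaNL {I J K : Type*} [Fintype J] [Fintype K]
    (p : I × J → ℝ) (q : I × K → ℝ) (α : ℝ) :
    Set ((J → ℕ) × (K → ℕ)) :=
  {w | (∀ j, w.1 j = 0 ∨ w.1 j = 1) ∧ (∀ k, w.2 k = 0 ∨ w.2 k = 1) ∧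
    ∀ i : I, (1 - ∏ j, p (i, j) ^ w.1 j) * (1 - ∏ k, q (i, k) ^ w.2 k) ≥ α}

/-- The linearly approximated feasible region `Ω_LA` of the GUTLCSCP-LA: binary pairs
`(y, z)` satisfying, for all demand nodes `i`, the three relaxed linear constraints
with tangency point `δ`. -/
def OmegaLA {I J K : Type*} [Fintype J] [Fintype K]
    (p : I × J → ℝ) (q : I × K → ℝ) (α β γ δ : ℝ) :
    Set ((J → ℕ) × (K → ℕ)) :=
  {w | (∀ j, w.1 j = 0 ∨ w.1 j = 1) ∧ (∀ k, w.2 k = 0 ∨ w.2 k = 1) ∧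
    ∀ i : I,
      (∑ j, (w.1 j : ℝ) * Real.log (p (i, j)) ≤ Real.log (1 - α)) ∧
      (∑ k, (w.2 k : ℝ) * Real.log (q (i, k)) ≤ Real.log (1 - α)) ∧
      (β * ∑ j, (w.1 j : ℝ) * Real.log (p (i, j)) +
          γ * ∑ k, (w.2 k : ℝ) * Real.log (q (i, k)) ≤
        Real.log ((1 - α / (1 - δ)) ^ β * δ ^ γ))}

/-- The building cost `c(y,z) = ∑ j, c¹ j * y j + ∑ k, c² k * z k`. -/
def coverCost {J K : Type*} [Fintype J] [Fintype K]
    (c₁ : J → ℝ) (c₂ : K → ℝ) (w : (J → ℕ) × (K → ℕ)) : ℝ :=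
  ∑ j, c₁ j * (w.1 j : ℝ) + ∑ k, c₂ k * (w.2 k : ℝ)

theorem two_mul_mul_le_mul_add_mul {R : Type*} [CommRing R] [LinearOrder R] [IsStrictOrderedRing R]
    {a b s t : R} (ha : 0 ≤ a) (hb : 0 ≤ b) (hs : 0 ≤ s) (ht : 0 ≤ t) (h : a * b ≤ s * t) :
    2 * (a * b) ≤ b * s + a * t := by
  refine two_mul_le_add_of_sq_le_mul (mul_nonneg hb hs) (mul_nonneg ha ht) ?_
  calc
    (a * b) ^ 2 = a * b * (a * b) := sq _
    _ ≤ a * b * (s * t) := mul_le_mul_of_nonneg_left h (mul_nonneg ha hb)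
    _ = b * s * (a * t) := by ring

theorem log_sub_log_le_div_sub_one {x x₀ : ℝ} (hx : 0 < x) (hx₀ : 0 < x₀) :
    Real.log x - Real.log x₀ ≤ x / x₀ - 1 := by
  rw [← Real.log_div hx.ne' hx₀.ne']
  exact Real.log_le_sub_one_of_pos (div_pos hx hx₀)

theorem weighted_log_le_of_tangent {β γ P₀ Q₀ P Q : ℝ} (hβ : 0 ≤ β) (hγ : 0 ≤ γ)
    (hP₀ : P₀ ∈ Set.Ioo (0 : ℝ) 1) (hQ₀ : Q₀ ∈ Set.Ioo (0 : ℝ) 1)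
    (htan : β * (1 - P₀) * Q₀ = γ * (1 - Q₀) * P₀)
    (hP : P ∈ Set.Ioc (0 : ℝ) 1) (hQ : Q ∈ Set.Ioc (0 : ℝ) 1)
    (hcover : (1 - P₀) * (1 - Q₀) ≤ (1 - P) * (1 - Q)) :
    β * Real.log P + γ * Real.log Q ≤ β * Real.log P₀ + γ * Real.log Q₀ := by
  obtain ⟨hP₀pos, hP₀lt⟩ := hP₀
  obtain ⟨hQ₀pos, hQ₀lt⟩ := hQ₀
  have hP₀' : 0 < 1 - P₀ := sub_pos.2 hP₀lt
  have hQ₀' : 0 < 1 - Q₀ := sub_pos.2 hQ₀lt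
  have hlogP := mul_le_mul_of_nonneg_left (log_sub_log_le_div_sub_one hP.1 hP₀pos) hβ
  have hlogQ := mul_le_mul_of_nonneg_left (log_sub_log_le_div_sub_one hQ.1 hQ₀pos) hγ
  have hsupport : (1 - Q₀) * (P - P₀) + (1 - P₀) * (Q - Q₀) ≤ 0 := by
    linarith [two_mul_mul_le_mul_add_mul hP₀'.le hQ₀'.le (sub_nonneg.2 hP.2) (sub_nonneg.2 hQ.2)
      hcover]
  have hγ_eq : γ = β * (1 - P₀) * Q₀ / ((1 - Q₀) * P₀) := by
    rw [eq_div_iff (by positivity), htan, mul_assoc]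
  have hlinear : β * (P / P₀ - 1) + γ * (Q / Q₀ - 1) ≤ 0 :=
    calc
      β * (P / P₀ - 1) + γ * (Q / Q₀ - 1)
          = β / ((1 - Q₀) * P₀) * ((1 - Q₀) * (P - P₀) + (1 - P₀) * (Q - Q₀)) := by
        rw [hγ_eq]
        field_simp
      _ ≤ 0 := mul_nonpos_of_nonneg_of_nonpos (by positivity) hsupport
  linarith

theorem prod_pow_mem_Ioc {J R : Type*} [CommSemiring R] [PartialOrder R] [IsStrictOrderedRing R]
    {s : Finset J} {p : J → R} (hp : ∀ j ∈ s, p j ∈ Set.Ioc 0 1) (y : J → ℕ) :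
    ∏ j ∈ s, p j ^ y j ∈ Set.Ioc 0 1 :=
  ⟨Finset.prod_pos fun j hj => pow_pos (hp j hj).1 _,
    Finset.prod_le_one (fun j hj => pow_nonneg (hp j hj).1.le _)
      fun j hj => pow_le_one₀ (hp j hj).1.le (hp j hj).2⟩

theorem sum_mul_log_eq_log_prod_pow {J : Type*} {s : Finset J} {p : J → ℝ}
    (hp : ∀ j ∈ s, p j ≠ 0) (y : J → ℕ) :
    ∑ j ∈ s, (y j : ℝ) * Real.log (p j) = Real.log (∏ j ∈ s, p j ^ y j) := by
  rw [Real.log_prod fun j hj => pow_ne_zero _ (hp j hj)]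
  simp only [Real.log_pow]

theorem le_one_sub_of_le_mul {R : Type*} [CommRing R] [LinearOrder R] [IsStrictOrderedRing R]
    {a x y : R} (hx : x ≤ 1) (hy : 0 ≤ y) (h : a ≤ (1 - x) * (1 - y)) : x ≤ 1 - a :=
  le_sub_comm.1 (h.trans (mul_le_of_le_one_right (sub_nonneg.2 hx) (sub_le_self 1 hy)))

theorem weighted_log_le_log_tangent {α β γ δ P Q : ℝ} (hα : 0 < α) (hβ : 0 ≤ β) (hγ : 0 ≤ γ)
    (hδ : δ ∈ Set.Ioo 0 (1 - α)) (htan : α * β * δ = γ * (1 - δ) * (1 - δ - α))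
    (hP : P ∈ Set.Ioc (0 : ℝ) 1) (hQ : Q ∈ Set.Ioc (0 : ℝ) 1) (hcover : α ≤ (1 - P) * (1 - Q)) :
    β * Real.log P + γ * Real.log Q ≤ Real.log ((1 - α / (1 - δ)) ^ β * δ ^ γ) := by
  obtain ⟨hδ₀, hδ₁⟩ := hδ
  have hu : 0 < 1 - δ := by linarith
  have hP₀ : 1 - α / (1 - δ) ∈ Set.Ioo (0 : ℝ) 1 :=
    ⟨sub_pos.2 ((div_lt_one hu).2 (by linarith)), sub_lt_self 1 (div_pos hα hu)⟩
  rw [Real.log_mul (Real.rpow_pos_of_pos hP₀.1 β).ne' (Real.rpow_pos_of_pos hδ₀ γ).ne',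
    Real.log_rpow hP₀.1, Real.log_rpow hδ₀]
  refine weighted_log_le_of_tangent hβ hγ hP₀ ⟨hδ₀, by linarith⟩ ?_ hP hQ ?_
  · field_simp
    linarith
  · rwa [sub_sub_cancel, div_mul_cancel₀ α hu.ne']

theorem omegaNL_subset_omegaLA {I J K : Type*} [Fintype J] [Fintype K]
    {p : I × J → ℝ} {q : I × K → ℝ} {α β γ δ : ℝ}
    (hp : ∀ ij, p ij ∈ Set.Ioc (0 : ℝ) 1) (hq : ∀ ik, q ik ∈ Set.Ioc (0 : ℝ) 1)
    (hα : 0 < α) (hβ : 0 ≤ β) (hγ : 0 ≤ γ)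
    (hδ : δ ∈ Set.Ioo 0 (1 - α)) (htan : α * β * δ = γ * (1 - δ) * (1 - δ - α)) :
    OmegaNL p q α ⊆ OmegaLA p q α β γ δ := by
  rintro ⟨y, z⟩ ⟨hy, hz, hcover⟩
  refine ⟨hy, hz, fun i => ?_⟩
  have hP := prod_pow_mem_Ioc (s := Finset.univ) (fun j _ => hp (i, j)) y
  have hQ := prod_pow_mem_Ioc (s := Finset.univ) (fun k _ => hq (i, k)) z
  have hPQ : α ≤ _ := hcover i
  have hQP := hPQ.trans_eq (mul_comm _ _)
  rw [sum_mul_log_eq_log_prod_pow (fun j _ => (hp (i, j)).1.ne') y,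
    sum_mul_log_eq_log_prod_pow (fun k _ => (hq (i, k)).1.ne') z]
  exact ⟨Real.log_le_log hP.1 (le_one_sub_of_le_mul hP.2 hQ.1.le hPQ),
    Real.log_le_log hQ.1 (le_one_sub_of_le_mul hQ.2 hP.1.le hQP),
    weighted_log_le_log_tangent hα hβ hγ hδ htan hP hQ hPQ⟩

/-- The tangency point `δ = n₃` of the linear approximation: the smaller root of the tangency
equation `α * β * δ = γ * (1 - δ) * (1 - δ - α)`, which is quadratic in `δ`. -/
noncomputable def tangencyPoint (α β γ : ℝ) : ℝ :=
  (2 * γ + α * β - α * γ -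
      Real.sqrt (α * (4 * β * γ + α * β ^ 2 + α * γ ^ 2 - 2 * α * β * γ))) /
    (2 * γ)

section TangencyPoint

variable {α β γ : ℝ}

theorem mul_tangencyPoint_eq (hα : 0 ≤ α) (hβ : 0 ≤ β) (hγ : 0 < γ) :
    α * β * tangencyPoint α β γ =
      γ * (1 - tangencyPoint α β γ) * (1 - tangencyPoint α β γ - α) := by
  set D := α * (4 * β * γ + α * β ^ 2 + α * γ ^ 2 - 2 * α * β * γ) with hD
  have hD_nonneg : 0 ≤ D := by
    rw [show D = α * (4 * β * γ + α * (β - γ) ^ 2) by rw [hD]; ring]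
    positivity
  have hdiscrim : discrim γ (-(2 * γ + α * β - α * γ)) (γ * (1 - α)) = √D * √D := by
    rw [Real.mul_self_sqrt hD_nonneg, discrim]
    ring
  have hroot := (quadratic_eq_zero_iff hγ.ne' hdiscrim (tangencyPoint α β γ)).2
    (Or.inr (by rw [neg_neg, tangencyPoint]))
  linarith

theorem tangencyPoint_pos (hα : α < 1) (hαβ : 0 ≤ α * β) (hγ : 0 < γ) :
    0 < tangencyPoint α β γ := by
  have hsum : 0 < 2 * γ + α * β - α * γ := by
    linarith [mul_lt_mul_of_pos_right hα hγ]
  refine div_pos (sub_pos.2 ((Real.sqrt_lt' hsum).2 ?_)) (by positivity)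
  have hgap : 0 < 4 * γ ^ 2 * (1 - α) := mul_pos (by positivity) (sub_pos.2 hα)
  linarith

theorem tangencyPoint_lt_one_sub (hα : α ∈ Set.Ioo (0 : ℝ) 1) (hβ : 0 < β) (hγ : 0 < γ) :
    tangencyPoint α β γ < 1 - α := by
  obtain ⟨hα₀, hα₁⟩ := hα
  have hsqrt : α * (β + γ) < √(α * (4 * β * γ + α * β ^ 2 + α * γ ^ 2 - 2 * α * β * γ)) := by
    refine Real.lt_sqrt_of_sq_lt ?_
    have hgap : 0 < 4 * (α * β * γ) * (1 - α) := mul_pos (by positivity) (sub_pos.2 hα₁)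
    linarith
  rw [tangencyPoint, div_lt_iff₀ (by positivity)]
  linarith

end TangencyPoint

theorem la_optimum_is_lower_bound_general
    {I J K E : Type*} [Fintype J] [Fintype K] [LE E]
    {p : I × J → ℝ} {q : I × K → ℝ}
    (hp : ∀ ij, p ij ∈ Set.Ioc (0 : ℝ) 1) (hq : ∀ ik, q ik ∈ Set.Ioc (0 : ℝ) 1)
    {α β γ : ℝ} (hα : α ∈ Set.Ioo (0 : ℝ) 1) (hβ : 0 < β) (hγ : 0 < γ)
    {cost : (J → ℕ) × (K → ℕ) → E} {m : E}
    (hm : ∀ w ∈ OmegaLA p q α β γ (tangencyPoint α β γ), m ≤ cost w) :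
    ∀ w ∈ OmegaNL p q α, m ≤ cost w := by
  have hδ : tangencyPoint α β γ ∈ Set.Ioo 0 (1 - α) :=
    ⟨tangencyPoint_pos hα.2 (mul_pos hα.1 hβ).le hγ, tangencyPoint_lt_one_sub hα hβ hγ⟩
  have htan := mul_tangencyPoint_eq hα.1.le hβ.le hγ
  exact fun w hw => hm w (omegaNL_subset_omegaLA hp hq hα.1 hβ.le hγ.le hδ htan hw)

/-- Proposition 1 (first part): if `(y*, z*)` minimizes the cost over the linearly
approximated feasible region `Ω_LA`, then its cost is a lower bound on the cost of
every point of the original nonlinear feasible region `Ω`. -/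
theorem la_optimum_is_lower_bound
    {I J K : Type*} [Fintype I] [Fintype J] [Fintype K]
    (p : I × J → ℝ) (q : I × K → ℝ)
    (hp : ∀ ij, p ij ∈ Set.Ioo (0 : ℝ) 1) (hq : ∀ ik, q ik ∈ Set.Ioo (0 : ℝ) 1)
    (c₁ : J → ℝ) (c₂ : K → ℝ)
    (α β γ : ℝ) (hα : α ∈ Set.Ioo (0 : ℝ) 1)
    (hβ : β ∈ Set.Ioo (0 : ℝ) 1) (hγ : γ ∈ Set.Ioo (0 : ℝ) 1)
    (hβγ : β + γ = 1)
    (δ : ℝ)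
    (hδ : δ = (2 * γ + α * β - α * γ -
        Real.sqrt (α * (4 * β * γ + α * β ^ 2 + α * γ ^ 2 - 2 * α * β * γ))) /
      (2 * γ))
    (wstar : (J → ℕ) × (K → ℕ))
    (hmem : wstar ∈ OmegaLA p q α β γ δ)
    (hopt : ∀ w ∈ OmegaLA p q α β γ δ, coverCost c₁ c₂ wstar ≤ coverCost c₁ c₂ w) :
    ∀ w ∈ OmegaNL p q α, coverCost c₁ c₂ wstar ≤ coverCost c₁ c₂ w := by
  subst hδ
  exact la_optimum_is_lower_bound_general (fun ij => Set.Ioo_subset_Ioc_self (hp ij))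
    (fun ik => Set.Ioo_subset_Ioc_self (hq ik)) hα hβ.1 hγ.1 hopt
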